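/- Let K ⊂ ℝ² be a symmetric convex body with vol₂(K) = 1 and let N ≥ 2 be an integer. For r ≥ 0 and 0 ≤ θ < 2π, let ℓ(r,θ) = vol₁({(x,y) : (x,y)·(cos θ, sin θ) = r} ∩ K) and A(r,θ) = vol₂({(x,y) : |(x,y)·(cos θ, sin θ)| ≤ r} ∩ K). Then 𝔼 V_{K,N} = 1 − (N/3) ∫₀^{2π} ∫₀^∞ A(r,θ)^{N−1} ℓ(r,θ)³ dr dθ. -/

import Mathlib

open MeasureTheory Set

noncomputable section

variable {E : Type*} [NormedAddCommGroup E] [InnerProductSpace ℝ E]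

/-- A symmetric convex body: a compact convex set with nonempty interior with `K = -K`. -/
def IsSymConvexBody (K : Set E) : Prop :=
  IsCompact K ∧ Convex ℝ K ∧ (interior K).Nonempty ∧ K = -K

/-- `momentU n N K p = 𝔼 U_{K,N}^p`, the `p`-th moment of the normalized volume of the
convex hull of `N` independent uniform random points in `K ⊆ ℝⁿ`. -/
def momentU (n N : ℕ) (K : Set (EuclideanSpace ℝ (Fin n))) (p : ℝ) : ℝ :=
  (∫ x : Fin N → EuclideanSpace ℝ (Fin n) in {x | ∀ i, x i ∈ K},
      ((volume (convexHull ℝ (Set.range x))).toReal / (volume K).toReal) ^ p) /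
    (volume K).toReal ^ N

/-- `momentV n N K p = 𝔼 V_{K,N}^p`, the `p`-th moment of the normalized volume of the
symmetric convex hull `conv{±x₁, …, ±x_N}` of `N` independent uniform random points
in `K ⊆ ℝⁿ`. -/
def momentV (n N : ℕ) (K : Set (EuclideanSpace ℝ (Fin n))) (p : ℝ) : ℝ :=
  (∫ x : Fin N → EuclideanSpace ℝ (Fin n) in {x | ∀ i, x i ∈ K},
      ((volume (convexHull ℝ (Set.range x ∪ -Set.range x))).toReal / (volume K).toReal) ^ p) /
    (volume K).toReal ^ N

open scoped ENNReal

abbrev Pl := EuclideanSpace ℝ (Fin 2)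

def dt (p q : Pl) : ℝ := p 0 * q 1 - p 1 * q 0

lemma pl_ext {p q : Pl} (h0 : p 0 = q 0) (h1 : p 1 = q 1) : p = q := by
  ext i; fin_cases i <;> assumption

lemma measurable_mk : Measurable (fun p : ℝ × ℝ => (!₂[p.1, p.2] : Pl)) := by
  have : Continuous (fun p : ℝ × ℝ => (!₂[p.1, p.2] : Pl)) := by fun_prop
  exact this.measurable

lemma mp_mk : MeasurePreserving (fun p : ℝ × ℝ => (!₂[p.1, p.2] : Pl)) volume volume := by
  have h := (PiLp.volume_preserving_toLp (Fin 2)).comp (volume_preserving_finTwoArrow ℝ).symm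
  have e : (fun p : ℝ × ℝ => (!₂[p.1, p.2] : Pl)) = WithLp.toLp 2 ∘ MeasurableEquiv.finTwoArrow.symm := by
    funext p; apply pl_ext <;> rfl
  rw [e]; exact h

lemma lint_mk (f : Pl → ℝ≥0∞) (hf : Measurable f) :
    ∫⁻ x, f x = ∫⁻ p : ℝ × ℝ, f !₂[p.1, p.2] :=
  (mp_mk.lintegral_comp hf).symm

lemma lint_polar (f : Pl → ℝ≥0∞) (hf : Measurable f) :
    ∫⁻ x, f x = ∫⁻ φ in Ioo (-Real.pi) Real.pi, ∫⁻ ρ in Ioi (0 : ℝ),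
      ENNReal.ofReal ρ * f !₂[ρ * Real.cos φ, ρ * Real.sin φ] := by
  rw [lint_mk f hf, ← lintegral_comp_polarCoord_symm]
  have : polarCoord.target = Ioi (0 : ℝ) ×ˢ Ioo (-Real.pi) Real.pi := rfl
  rw [this, Measure.volume_eq_prod, ← Measure.prod_restrict, lintegral_prod_symm]
  · rfl
  · refine Measurable.aemeasurable ?_
    simp only [polarCoord_symm_apply, smul_eq_mul]
    refine Measurable.mul (by fun_prop) (hf.comp (Continuous.measurable ?_))
    fun_prop

lemma cs (φ : ℝ) : Real.sin φ ^ 2 + Real.cos φ ^ 2 = 1 := Real.sin_sq_add_cos_sq φ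

/-- rotated point -/
def rp (φ r t : ℝ) : Pl := !₂[r * Real.sin φ + t * Real.cos φ, -(r * Real.cos φ) + t * Real.sin φ]

lemma rp_cont : Continuous (fun z : ℝ × ℝ × ℝ => rp z.1 z.2.1 z.2.2) := by
  unfold rp; fun_prop

def rotL (φ : ℝ) : Pl →ₗᵢ[ℝ] Pl where
  toFun p := rp φ (p 0) (p 1)
  map_add' p q := by apply pl_ext <;> simp [rp] <;> ring
  map_smul' c p := by apply pl_ext <;> simp [rp] <;> ring
  norm_map' p := by
    simp only [EuclideanSpace.norm_eq, Fin.sum_univ_two, rp]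
    congr 1
    simp [sq_abs]
    linear_combination (p 0 ^ 2 + p 1 ^ 2) * cs φ

lemma lint_rot (φ : ℝ) (f : Pl → ℝ≥0∞) (hf : Measurable f) :
    ∫⁻ x, f x = ∫⁻ r, ∫⁻ t, f (rp φ r t) := by
  have h := ((rotL φ).toLinearIsometryEquiv rfl).measurePreserving
  rw [← h.lintegral_comp hf, lint_mk (fun a => f (((rotL φ).toLinearIsometryEquiv rfl) a)) (hf.comp h.measurable), Measure.volume_eq_prod, lintegral_prod]
  · rfl
  · exact (hf.comp h.measurable |>.comp measurable_mk).aemeasurable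

lemma chord_hausdorff (K : Set Pl) (φ r : ℝ) :
    μH[1] ({p : Pl | p 0 * Real.sin φ - p 1 * Real.cos φ = r} ∩ K) =
      volume {t : ℝ | rp φ r t ∈ K} := by
  have hi : Isometry (fun t => rp φ r t) := by
    refine Isometry.of_dist_eq fun s t => ?_
    rw [EuclideanSpace.dist_eq, Real.dist_eq, Fin.sum_univ_two, ← Real.sqrt_sq_eq_abs]
    congr 1
    simp [rp, Real.dist_eq, sq_abs]
    linear_combination (s - t) ^ 2 * cs φ
  rw [← hausdorffMeasure_real, ← hi.hausdorffMeasure_image (Or.inl zero_le_one)]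
  congr 1
  ext p
  simp only [mem_inter_iff, mem_ofPred_eq, mem_image]
  constructor
  · rintro ⟨h, hp⟩
    have e : rp φ r (p 0 * Real.cos φ + p 1 * Real.sin φ) = p := by
      apply pl_ext <;> simp only [rp] <;> simp <;> rw [← h]
      · linear_combination p 0 * cs φ
      · linear_combination p 1 * cs φ
    exact ⟨_, by rw [e]; exact hp, e⟩
  · rintro ⟨t, ht, rfl⟩
    refine ⟨?_, ht⟩
    simp [rp]
    linear_combination r * cs φ

lemma line_null (α β c : ℝ) (h : α ≠ 0 ∨ β ≠ 0) :
    volume {p : Pl | α * p 0 + β * p 1 = c} = 0 := by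
  let s : AffineSubspace ℝ Pl :=
    { carrier := {p : Pl | α * p 0 + β * p 1 = c}
      smul_vsub_vadd_mem' := by
        intro d p q r hp hq hr
        simp at hp hq hr ⊢
        linear_combination d * hp - d * hq + hr }
  have hs : s ≠ ⊤ := by
    intro hs
    have h0 : (0 : Pl) ∈ s := by rw [hs]; trivial
    have h1 : (!₂[1, 0] : Pl) ∈ s := by rw [hs]; trivial
    have h2 : (!₂[0, 1] : Pl) ∈ s := by rw [hs]; trivial
    change _ = _ at h0 h1 h2
    simp at h0 h1 h2
    subst h0
    tauto
  exact Measure.addHaar_affineSubspace volume s hs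

lemma interval_int (I : Set ℝ) (hc : IsCompact I) (hv : Convex ℝ I) :
    ∫⁻ t, ∫⁻ ρ in Ioi (0 : ℝ), I.indicator 1 t * (ENNReal.ofReal ρ * I.indicator 1 (t + ρ)) =
      volume I ^ 3 / 6 := by
  rcases I.eq_empty_or_nonempty with rfl | hne
  · simp
  obtain ⟨a, b, hab, rfl⟩ : ∃ a b, a ≤ b ∧ I = Icc a b := by
    refine ⟨sInf I, sSup I, ?_, eq_Icc_of_connected_compact ⟨hne, hv.isPreconnected⟩ hc⟩
    exact csInf_le_csSup hne hc.bddBelow hc.bddAbove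
  have h1 : ∀ t, ∫⁻ ρ in Ioi (0 : ℝ), (Icc a b).indicator 1 t *
      (ENNReal.ofReal ρ * (Icc a b).indicator 1 (t + ρ)) =
      (Icc a b).indicator (fun t => ENNReal.ofReal ((b - t) ^ 2 / 2)) t := by
    intro t
    by_cases ht : t ∈ Icc a b
    · simp only [ht, indicator_of_mem, Pi.one_apply, one_mul]
      have : ∀ ρ ∈ Ioi (0:ℝ), ENNReal.ofReal ρ * (Icc a b).indicator 1 (t + ρ) =
          (Iic (b - t)).indicator (fun ρ => ENNReal.ofReal ρ) ρ := by
        intro ρ hρ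
        have hρ : 0 < ρ := hρ
        have : t + ρ ∈ Icc a b ↔ ρ ∈ Iic (b - t) := by
          simp only [mem_Icc, mem_Iic]
          constructor
          · intro h; linarith [h.2]
          · intro h; exact ⟨by linarith [ht.1], by linarith⟩
        by_cases h : ρ ∈ Iic (b - t)
        · simp only [h, this.2 h, indicator_of_mem]; simp
        · have h' := h; rw [← this] at h'
          simp only [h, h', indicator_of_notMem, not_false_eq_true]; simp
      rw [setLIntegral_congr_fun measurableSet_Ioi this, setLIntegral_indicator measurableSet_Iic,
        inter_comm, Ioi_inter_Iic, ← ofReal_integral_eq_lintegral_ofReal,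
        ← intervalIntegral.integral_of_le (by linarith [ht.2]), integral_id]
      · simp
      · exact (continuous_id.integrableOn_Icc).mono_set Ioc_subset_Icc_self
      · filter_upwards [ae_restrict_mem measurableSet_Ioc] with x hx using hx.1.le
    · simp [ht]
  simp only [h1]
  rw [lintegral_indicator measurableSet_Icc, ← ofReal_integral_eq_lintegral_ofReal,
    integral_Icc_eq_integral_Ioc, ← intervalIntegral.integral_of_le hab, Real.volume_Icc]
  · have : ∫ x in a..b, (b - x) ^ 2 / 2 = (b - a) ^ 3 / 6 := by
      rw [intervalIntegral.integral_div, intervalIntegral.integral_comp_sub_left (fun x => x ^ 2)]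
      simp; ring
    rw [this, ENNReal.ofReal_div_of_pos (by norm_num), ENNReal.ofReal_pow (by linarith)]
    simp
  · exact (Continuous.integrableOn_Icc (by fun_prop))
  · exact Filter.Eventually.of_forall fun x => by positivity

def hull {N : ℕ} (x : Fin N → Pl) : Set Pl := convexHull ℝ (Set.range x ∪ -Set.range x)

lemma sep {N : ℕ} (x : Fin N → Pl) (y : Pl) :
    y ∉ hull x ↔ ∃ f : Pl →L[ℝ] ℝ, ∀ k, |f (x k)| < f y := by
  constructor
  · intro h
    have hfin : (Set.range x ∪ -Set.range x).Finite :=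
      (Set.finite_range x).union (Set.finite_range x).neg
    obtain ⟨f, u, h1, h2⟩ := geometric_hahn_banach_closed_point (convex_convexHull ℝ _)
      (hfin.isCompact_convexHull ℝ).isClosed h
    refine ⟨f, fun k => abs_lt.2 ⟨?_, ?_⟩⟩
    · have := h1 (-x k) (subset_convexHull ℝ _ (Or.inr (by simp)))
      rw [map_neg] at this
      linarith
    · have := h1 (x k) (subset_convexHull ℝ _ (Or.inl (by simp)))
      linarith
  · rintro ⟨f, hf⟩ h
    have hsub : hull x ⊆ {p | f p < f y} := by
      refine convexHull_min ?_ (convex_halfSpace_lt f.toLinearMap.isLinear _)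
      rintro p (⟨k, rfl⟩ | hp)
      · exact (abs_lt.1 (hf k)).2
      · obtain ⟨k, hk⟩ := hp
        have : p = - x k := by rw [hk, neg_neg]
        change f p < f y
        rw [this, map_neg]
        linarith [(abs_lt.1 (hf k)).1]
    have h3 : f y < f y := hsub h
    exact lt_irrefl _ h3

lemma hull_open {N : ℕ} : IsOpen {z : (Fin N → Pl) × Pl | z.2 ∉ hull z.1} := by
  have : {z : (Fin N → Pl) × Pl | z.2 ∉ hull z.1} =
      ⋃ f : Pl →L[ℝ] ℝ, ⋂ k, {z : (Fin N → Pl) × Pl | |f (z.1 k)| < f z.2} := by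
    ext z
    simp only [mem_iUnion, mem_iInter]
    exact sep z.1 z.2
  rw [this]
  refine isOpen_iUnion fun f => isOpen_iInter_of_finite fun k => ?_
  exact isOpen_lt (by fun_prop) (by fun_prop)

def KN (N : ℕ) (K : Set Pl) : Set (Fin N → Pl) := {x | ∀ i, x i ∈ K}

lemma KN_eq (N : ℕ) (K : Set Pl) : KN N K = Set.pi univ (fun _ => K) := by
  ext x; simp [KN]

lemma KN_meas (N : ℕ) {K : Set Pl} (hK : MeasurableSet K) : MeasurableSet (KN N K) := by
  rw [KN_eq]; exact MeasurableSet.univ_pi fun _ => hK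

lemma KN_vol (N : ℕ) {K : Set Pl} (hv : volume K = 1) : volume (KN N K) = 1 := by
  rw [KN_eq, volume_pi_pi]; simp [hv]

lemma hull_sub {N : ℕ} {K : Set Pl} (hc : Convex ℝ K) (hs : K = -K) {x : Fin N → Pl}
    (hx : x ∈ KN N K) : hull x ⊆ K := by
  refine convexHull_min ?_ hc
  rintro p (⟨k, rfl⟩ | hp)
  · exact hx k
  · obtain ⟨k, hk⟩ := hp
    rw [hs]
    change -p ∈ K
    rw [← hk]; exact hx k

lemma hull_meas {N : ℕ} (x : Fin N → Pl) : MeasurableSet (hull x) := by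
  have hfin : (Set.range x ∪ -Set.range x).Finite :=
    (Set.finite_range x).union (Set.finite_range x).neg
  exact (hfin.isCompact_convexHull ℝ).measurableSet

/-- Step A -/
lemma stepA {N : ℕ} {K : Set Pl} (hKc : IsCompact K) (hc : Convex ℝ K) (hs : K = -K)
    (hv : volume K = 1) :
    (∫⁻ x in KN N K, volume (hull x)) +
      ∫⁻ y in K, volume {x ∈ KN N K | y ∉ hull x} = 1 := by
  have hKm := hKc.measurableSet
  have hKN := KN_meas N hKm
  have hcl : MeasurableSet {z : (Fin N → Pl) × Pl | z.2 ∈ hull z.1} := by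
    have h := (hull_open (N := N)).measurableSet.compl
    convert h using 1
    ext z; simp
  have hm : Measurable (fun x : Fin N → Pl => volume (hull x)) :=
    measurable_measure_prodMk_left hcl
  have hS : MeasurableSet ((KN N K ×ˢ K) ∩ {z : (Fin N → Pl) × Pl | z.2 ∉ hull z.1}) :=
    (hKN.prod hKm).inter hull_open.measurableSet
  have e1 : ∫⁻ y in K, volume {x ∈ KN N K | y ∉ hull x} =
      ((volume : Measure (Fin N → Pl)).prod (volume : Measure Pl))
        ((KN N K ×ˢ K) ∩ {z : (Fin N → Pl) × Pl | z.2 ∉ hull z.1}) := by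
    rw [Measure.prod_apply_symm hS, ← lintegral_indicator hKm]
    congr 1
    funext y
    by_cases hy : y ∈ K
    · rw [indicator_of_mem hy]
      congr 1
      ext x; simp [hy]
    · rw [indicator_of_notMem hy]
      symm
      convert measure_empty (μ := (volume : Measure (Fin N → Pl)))
      ext x; simp [hy]
  have e2 : ((volume : Measure (Fin N → Pl)).prod (volume : Measure Pl))
        ((KN N K ×ˢ K) ∩ {z : (Fin N → Pl) × Pl | z.2 ∉ hull z.1}) =
      ∫⁻ x in KN N K, volume (K \ hull x) := by
    rw [Measure.prod_apply hS, ← lintegral_indicator hKN]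
    congr 1
    funext x
    by_cases hx : x ∈ KN N K
    · rw [indicator_of_mem hx]
      congr 1
      ext y; simp [hx]
    · rw [indicator_of_notMem hx]
      convert measure_empty (μ := (volume : Measure Pl))
      ext y; simp [hx]
  rw [e1, e2, ← lintegral_add_left hm]
  have : ∀ x ∈ KN N K, volume (hull x) + volume (K \ hull x) = 1 := by
    intro x hx
    rw [← hv, ← measure_inter_add_sdiff K (hull_meas x), inter_eq_self_of_subset_right (hull_sub hc hs hx)]
  rw [setLIntegral_congr_fun hKN this]
  simp [KN_vol N hv]

/-- product lemma -/
lemma prodlem {M : ℕ} {K : Set Pl} (hKm : MeasurableSet K) (R : Set (Pl × Pl))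
    (hR : MeasurableSet R) (j : Fin (M + 1)) :
    MeasurableSet {x ∈ KN (M + 1) K | ∀ k, k ≠ j → (x j, x k) ∈ R} ∧
    volume {x ∈ KN (M + 1) K | ∀ k, k ≠ j → (x j, x k) ∈ R} =
      ∫⁻ p in K, volume {q ∈ K | (p, q) ∈ R} ^ M := by
  let T : Set (Pl × (Fin M → Pl)) := {z | z.1 ∈ K ∧ ∀ i, z.2 i ∈ K ∧ (z.1, z.2 i) ∈ R}
  have hT : MeasurableSet T := by
    have : T = (Prod.fst ⁻¹' K) ∩ ⋂ i : Fin M, ((fun z : Pl × (Fin M → Pl) => z.2 i) ⁻¹' K ∩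
        (fun z : Pl × (Fin M → Pl) => (z.1, z.2 i)) ⁻¹' R) := by
      ext z; simp [T]
    rw [this]
    refine (measurable_fst hKm).inter (MeasurableSet.iInter fun i => ?_)
    refine MeasurableSet.inter ?_ ?_
    · exact (show Measurable (fun z : Pl × (Fin M → Pl) => z.2 i) by fun_prop) hKm
    · exact (show Measurable (fun z : Pl × (Fin M → Pl) => (z.1, z.2 i)) by fun_prop) hR
  have hmp := volume_preserving_piFinSuccAbove (fun _ : Fin (M + 1) => Pl) j
  have e : {x ∈ KN (M + 1) K | ∀ k, k ≠ j → (x j, x k) ∈ R} =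
      (MeasurableEquiv.piFinSuccAbove (fun _ : Fin (M + 1) => Pl) j) ⁻¹' T := by
    ext x
    change ((∀ i, x i ∈ K) ∧ ∀ k, k ≠ j → (x j, x k) ∈ R) ↔
      (x j ∈ K ∧ ∀ i, x (j.succAbove i) ∈ K ∧ (x j, x (j.succAbove i)) ∈ R)
    rw [Fin.forall_iff_succAbove j]
    constructor
    · rintro ⟨⟨h1, h2⟩, h3⟩
      exact ⟨h1, fun i => ⟨h2 i, h3 _ (Fin.succAbove_ne j i)⟩⟩
    · rintro ⟨h1, h2⟩
      refine ⟨⟨h1, fun i => (h2 i).1⟩, fun k hk => ?_⟩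
      obtain ⟨i, rfl⟩ := Fin.exists_succAbove_eq hk
      exact (h2 i).2
  rw [e]
  refine ⟨hmp.measurable hT, ?_⟩
  rw [hmp.measure_preimage hT.nullMeasurableSet, Measure.volume_eq_prod, Measure.prod_apply hT,
    ← lintegral_indicator hKm]
  congr 1
  funext p
  by_cases hp : p ∈ K
  · rw [indicator_of_mem hp]
    have : Prod.mk p ⁻¹' T = Set.pi univ (fun _ : Fin M => {q ∈ K | (p, q) ∈ R}) := by
      ext z; simp [T, hp]
    rw [this]
    erw [volume_pi_pi]
    simp
  · rw [indicator_of_notMem hp]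
    convert measure_empty (μ := (volume : Measure (Fin M → Pl)))
    ext z; simp [T, hp]

def aF (y p : Pl) : ℝ := (p 0 * y 0 + p 1 * y 1) / (y 0 ^ 2 + y 1 ^ 2)
def sF (y p : Pl) : ℝ := aF y p / dt y p - 1 / |dt y p|
def tF (y p : Pl) : ℝ := aF y p / dt y p + 1 / |dt y p|

lemma aF_meas (y : Pl) : Measurable (aF y) := by unfold aF; fun_prop
lemma dt_meas (y : Pl) : Measurable (dt y) := by unfold dt; fun_prop
lemma abs_meas {f : Pl → ℝ} (hf : Measurable f) : Measurable (fun p => |f p|) :=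
  continuous_abs.measurable.comp hf
lemma sF_meas (y : Pl) : Measurable (sF y) := by
  exact ((aF_meas y).div (dt_meas y)).sub (measurable_const.div (abs_meas (dt_meas y)))
lemma tF_meas (y : Pl) : Measurable (tF y) := by
  exact ((aF_meas y).div (dt_meas y)).add (measurable_const.div (abs_meas (dt_meas y)))

lemma D_pos {y : Pl} (hy : y ≠ 0) : 0 < y 0 ^ 2 + y 1 ^ 2 := by
  by_contra h
  apply hy
  have h0 : y 0 = 0 := by nlinarith [sq_nonneg (y 0), sq_nonneg (y 1)]
  have h1 : y 1 = 0 := by nlinarith [sq_nonneg (y 0), sq_nonneg (y 1)]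
  exact pl_ext (by simpa using h0) (by simpa using h1)

lemma abs_eq_aux {y p : Pl} (c : ℝ) (hb : dt y p ≠ 0) :
    |aF y p - c * dt y p| = |aF y p / dt y p - c| * |dt y p| := by
  rw [← abs_mul]; congr 1; field_simp

lemma st_lt {y p : Pl} (c : ℝ) (hb : dt y p ≠ 0) :
    (sF y p < c ∧ c < tF y p) ↔ |aF y p - c * dt y p| < 1 := by
  have hb' : 0 < |dt y p| := abs_pos.2 hb
  rw [abs_eq_aux c hb, ← lt_div_iff₀ hb', abs_lt]
  unfold sF tF
  constructor <;> rintro ⟨h1, h2⟩ <;> constructor <;> linarith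

lemma st_le {y p : Pl} (c : ℝ) (hb : dt y p ≠ 0) :
    (sF y p ≤ c ∧ c ≤ tF y p) ↔ |aF y p - c * dt y p| ≤ 1 := by
  have hb' : 0 < |dt y p| := abs_pos.2 hb
  rw [abs_eq_aux c hb, ← le_div_iff₀ hb', abs_le]
  unfold sF tF
  constructor <;> rintro ⟨h1, h2⟩ <;> constructor <;> linarith

lemma sF_lt_tF {y p : Pl} (hb : dt y p ≠ 0) : sF y p < tF y p := by
  have hb' : 0 < 1 / |dt y p| := by have := abs_pos.2 hb; positivity
  unfold sF tF; linarith

lemma dt_null {y : Pl} (hy : y ≠ 0) : volume {p : Pl | dt y p = 0} = 0 := by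
  have h := line_null (-y 1) (y 0) 0 (by
    by_contra h
    push Not at h
    apply hy
    exact pl_ext (by simpa using h.2) (by simpa using h.1))
  convert h using 2
  ext p
  simp only [mem_ofPred_eq, dt]
  constructor <;> intro h <;> linarith

lemma f_null {y : Pl} (hy : y ≠ 0) (c d : ℝ) :
    volume {p : Pl | aF y p - c * dt y p = d} = 0 := by
  have hD := D_pos hy
  have h := line_null (y 0 / (y 0 ^ 2 + y 1 ^ 2) + c * y 1) (y 1 / (y 0 ^ 2 + y 1 ^ 2) - c * y 0) d (by
    by_contra h
    push Not at h
    have : (y 0 / (y 0 ^ 2 + y 1 ^ 2) + c * y 1) * y 0 +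
      (y 1 / (y 0 ^ 2 + y 1 ^ 2) - c * y 0) * y 1 = 1 := by field_simp; ring
    rw [h.1, h.2] at this
    simp at this)
  convert h using 2
  ext p
  simp only [mem_ofPred_eq, dt, aF]
  have : (p 0 * y 0 + p 1 * y 1) / (y 0 ^ 2 + y 1 ^ 2) - c * (y 0 * p 1 - y 1 * p 0) =
    (y 0 / (y 0 ^ 2 + y 1 ^ 2) + c * y 1) * p 0 +
      (y 1 / (y 0 ^ 2 + y 1 ^ 2) - c * y 0) * p 1 := by ring
  rw [this]

def strip (K : Set Pl) (y : Pl) (c : ℝ) : Set Pl := {q ∈ K | |aF y q - c * dt y q| ≤ 1}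

lemma ae_b {y : Pl} (hy : y ≠ 0) : ∀ᵐ q : Pl, dt y q ≠ 0 := by
  rw [ae_iff]; simpa using dt_null hy

lemma ae_f {y : Pl} (hy : y ≠ 0) (c d : ℝ) : ∀ᵐ q : Pl, aF y q - c * dt y q ≠ d := by
  rw [ae_iff]; simpa using f_null hy c d

lemma vol_lt {K : Set Pl} {y : Pl} (hy : y ≠ 0) (c : ℝ) :
    volume {q ∈ K | sF y q < c ∧ c < tF y q} = volume (strip K y c) := by
  refine measure_congr ?_
  filter_upwards [ae_b hy, ae_f hy c 1, ae_f hy c (-1)] with q h1 h2 h3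
  refine propext ?_
  change (q ∈ K ∧ (sF y q < c ∧ c < tF y q)) ↔ (q ∈ K ∧ |aF y q - c * dt y q| ≤ 1)
  rw [st_lt c h1]
  refine and_congr_right fun _ => ⟨le_of_lt, fun h => lt_of_le_of_ne h fun h' => ?_⟩
  rcases eq_or_eq_neg_of_abs_eq h' with h | h
  · exact h2 h
  · exact h3 h

lemma vol_le {K : Set Pl} {y : Pl} (hy : y ≠ 0) (c : ℝ) :
    volume {q ∈ K | sF y q ≤ c ∧ c ≤ tF y q} = volume (strip K y c) := by
  refine measure_congr ?_
  filter_upwards [ae_b hy] with q h1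
  refine propext ?_
  change (q ∈ K ∧ (sF y q ≤ c ∧ c ≤ tF y q)) ↔ (q ∈ K ∧ |aF y q - c * dt y q| ≤ 1)
  rw [st_le c h1]

lemma notin_iff {N : ℕ} {y : Pl} (hy : y ≠ 0) (x : Fin (N + 1) → Pl) (hx : ∀ k, dt y (x k) ≠ 0) :
    y ∉ hull x ↔ ∃ c, ∀ k, sF y (x k) < c ∧ c < tF y (x k) := by
  have hD := D_pos hy
  rw [sep]
  constructor
  · rintro ⟨f, hf⟩
    have hfy : 0 < f y := lt_of_le_of_lt (abs_nonneg _) (hf 0)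
    let w : Pl := !₂[-y 1 / (y 0 ^ 2 + y 1 ^ 2), y 0 / (y 0 ^ 2 + y 1 ^ 2)]
    have hw : ∀ p, f p = aF y p * f y + dt y p * f w := by
      intro p
      have : p = aF y p • y + dt y p • w := by
        apply pl_ext <;> simp [aF, dt, w] <;> field_simp <;> ring
      conv_lhs => rw [this]
      simp
    refine ⟨-f w / f y, fun k => (st_lt _ (hx k)).2 ?_⟩
    have : aF y (x k) - -f w / f y * dt y (x k) = f (x k) / f y := by
      rw [hw (x k)]; field_simp; ring
    rw [this, abs_div, abs_of_pos hfy, div_lt_one hfy]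
    exact hf k
  · rintro ⟨c, hc⟩
    let f : Pl →L[ℝ] ℝ := (y 0 / (y 0 ^ 2 + y 1 ^ 2) + c * y 1) • EuclideanSpace.proj (0 : Fin 2) +
      (y 1 / (y 0 ^ 2 + y 1 ^ 2) - c * y 0) • EuclideanSpace.proj (1 : Fin 2)
    have hf : ∀ p, f p = aF y p - c * dt y p := by
      intro p; simp [f, aF, dt]; ring
    refine ⟨f, fun k => ?_⟩
    rw [hf, hf]
    have h1 : aF y y - c * dt y y = 1 := by simp [aF, dt]; field_simp; ring
    rw [h1]
    exact (st_lt c (hx k)).1 (hc k)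

/-- Step B -/
lemma stepB {M : ℕ} {K : Set Pl} (hKm : MeasurableSet K) {y : Pl} (hy : y ≠ 0) :
    volume {x ∈ KN (M + 1) K | y ∉ hull x} =
      (M + 1 : ℕ) * ∫⁻ p in K, volume (strip K y (sF y p)) ^ M := by
  have hs := sF_meas y
  have ht := tF_meas y
  let Rl : Set (Pl × Pl) := {z | sF y z.2 < sF y z.1 ∧ sF y z.1 < tF y z.2}
  let Re : Set (Pl × Pl) := {z | sF y z.2 ≤ sF y z.1 ∧ sF y z.1 ≤ tF y z.2}
  have hRl : MeasurableSet Rl :=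
    (measurableSet_lt (hs.comp measurable_snd) (hs.comp measurable_fst)).inter
      (measurableSet_lt (hs.comp measurable_fst) (ht.comp measurable_snd))
  have hRe : MeasurableSet Re :=
    (measurableSet_le (hs.comp measurable_snd) (hs.comp measurable_fst)).inter
      (measurableSet_le (hs.comp measurable_fst) (ht.comp measurable_snd))
  let El : Fin (M + 1) → Set (Fin (M + 1) → Pl) :=
    fun j => {x ∈ KN (M + 1) K | ∀ k, k ≠ j → (x j, x k) ∈ Rl}
  let Ee : Fin (M + 1) → Set (Fin (M + 1) → Pl) :=
    fun j => {x ∈ KN (M + 1) K | ∀ k, k ≠ j → (x j, x k) ∈ Re}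
  have vl : ∀ j, volume (El j) = ∫⁻ p in K, volume (strip K y (sF y p)) ^ M := by
    intro j
    rw [(prodlem hKm Rl hRl j).2]
    congr 1; funext p; rw [← vol_lt hy]; rfl
  have ve : ∀ j, volume (Ee j) = ∫⁻ p in K, volume (strip K y (sF y p)) ^ M := by
    intro j
    rw [(prodlem hKm Re hRe j).2]
    congr 1; funext p; rw [← vol_le hy]; rfl
  have hae : ∀ᵐ x : Fin (M + 1) → Pl, ∀ k, dt y (x k) ≠ 0 := by
    rw [ae_all_iff]
    intro k
    exact (Measure.quasiMeasurePreserving_eval (fun _ : Fin (M + 1) => (volume : Measure Pl)) k).ae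
      (ae_b hy)
  apply le_antisymm
  · calc volume {x ∈ KN (M + 1) K | y ∉ hull x} ≤ volume (⋃ j, Ee j) := by
          refine measure_mono_ae ?_
          filter_upwards [hae] with x hx h
          obtain ⟨hxK, hxy⟩ := h
          obtain ⟨c, hc⟩ := (notin_iff hy x hx).1 hxy
          obtain ⟨j, hj⟩ := Finite.exists_max (fun k => sF y (x k))
          refine mem_iUnion.2 ⟨j, hxK, fun k _ => ⟨hj k, ?_⟩⟩
          exact ((hc j).1.trans (hc k).2).le
      _ ≤ ∑ j, volume (Ee j) := measure_iUnion_fintype_le _ _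
      _ = _ := by simp [ve]
  · calc _ = ∑ j, volume (El j) := by simp [vl]
      _ = volume (⋃ j, El j) := by
          rw [measure_iUnion, tsum_fintype]
          · intro i j hij
            refine Set.disjoint_left.2 fun x hi hj => ?_
            exact lt_asymm (hi.2 j hij.symm).1 (hj.2 i hij).1
          · exact fun j => (prodlem hKm Rl hRl j).1
      _ ≤ _ := by
          refine measure_mono_ae ?_
          filter_upwards [hae] with x hx h
          obtain ⟨j, hxK, hj⟩ := mem_iUnion.1 h
          refine ⟨hxK, (notin_iff hy x hx).2 ?_⟩
          obtain ⟨t, ht⟩ := Finite.exists_min (fun k => tF y (x k))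
          have hlt : sF y (x j) < tF y (x t) := by
            by_cases htj : t = j
            · rw [htj]; exact sF_lt_tF (hx j)
            · exact (hj t htj).2
          obtain ⟨c, h1, h2⟩ := exists_between hlt
          refine ⟨c, fun k => ⟨?_, lt_of_lt_of_le h2 (ht k)⟩⟩
          by_cases hk : k = j
          · rw [hk]; exact h1
          · exact (hj k hk).1.trans h1

def Phi (K : Set Pl) (y p : Pl) : ℝ≥0∞ := volume {q ∈ K | |dt q (p - y)| ≤ |dt y p|}

lemma strip_pos {K : Set Pl} {y p : Pl} (hy : y ≠ 0) (h : 0 < dt y p) :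
    volume (strip K y (sF y p)) = Phi K y p := by
  have hD := D_pos hy
  unfold strip Phi
  congr 1
  ext q
  change (q ∈ K ∧ |aF y q - sF y p * dt y q| ≤ 1) ↔ (q ∈ K ∧ |dt q (p - y)| ≤ |dt y p|)
  have e : aF y q - sF y p * dt y q = dt q (p - y) / dt y p := by
    rw [eq_div_iff h.ne', sF, abs_of_pos h]
    field_simp
    simp only [aF, dt, PiLp.sub_apply]
    field_simp
    ring
  rw [e, abs_div, div_le_one (abs_pos.2 h.ne')]

lemma strip_neg {K : Set Pl} {y p : Pl} (hy : y ≠ 0) (h : dt y p < 0) :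
    volume (strip K y (sF y p)) = Phi K y (-p) := by
  have hD := D_pos hy
  unfold strip Phi
  congr 1
  ext q
  change (q ∈ K ∧ |aF y q - sF y p * dt y q| ≤ 1) ↔ (q ∈ K ∧ |dt q (-p - y)| ≤ |dt y (-p)|)
  have h2 : dt y (-p) = - dt y p := by simp [dt]; ring
  have e : aF y q - sF y p * dt y q = dt q (-p - y) / dt y (-p) := by
    have hne := h.ne
    rw [h2, eq_div_iff (by linarith), sF, abs_of_neg h]
    field_simp
    simp only [aF, dt, PiLp.sub_apply, PiLp.neg_apply]
    field_simp
    ring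
  rw [e, abs_div, div_le_one (abs_pos.2 (by rw [h2]; linarith))]

lemma stepC {M : ℕ} {K : Set Pl} (hKm : MeasurableSet K) (hs : K = -K) {y : Pl} (hy : y ≠ 0) :
    ∫⁻ p in K, volume (strip K y (sF y p)) ^ M =
      2 * ∫⁻ p in K ∩ {p | 0 < dt y p}, Phi K y p ^ M := by
  have hb := dt_meas y
  have hp : MeasurableSet {p : Pl | 0 < dt y p} := measurableSet_lt measurable_const hb
  have hn : MeasurableSet {p : Pl | dt y p < 0} := measurableSet_lt hb measurable_const
  rw [← lintegral_inter_add_sdiff _ K hp, two_mul]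
  congr 1
  · refine setLIntegral_congr_fun (hKm.inter hp) fun p h => ?_
    simp only [strip_pos hy h.2]
  · have e : (K \ {p : Pl | 0 < dt y p} : Set Pl) =ᵐ[volume] (K ∩ {p | dt y p < 0} : Set Pl) := by
      filter_upwards [ae_b hy] with p h
      refine propext ?_
      change (p ∈ K ∧ ¬ (0 < dt y p)) ↔ (p ∈ K ∧ dt y p < 0)
      refine and_congr_right fun _ => ⟨fun h' => lt_of_le_of_ne (not_lt.1 h') h, fun h' => not_lt.2 h'.le⟩
    rw [setLIntegral_congr e]
    have e2 : ∫⁻ p in K ∩ {p | dt y p < 0}, volume (strip K y (sF y p)) ^ M =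
        ∫⁻ p in K ∩ {p | dt y p < 0}, Phi K y (-p) ^ M :=
      setLIntegral_congr_fun (hKm.inter hn) fun p h => by simp only [strip_neg hy h.2]
    rw [e2, ← lintegral_indicator (hKm.inter hn), ← lintegral_indicator (hKm.inter hp),
      ← lintegral_neg_eq_self]
    congr 1
    funext p
    have h2 : dt y (-p) = - dt y p := by simp [dt]; ring
    have hk : -p ∈ K ↔ p ∈ K := by
      conv_rhs => rw [hs]
      rfl
    have : -p ∈ K ∩ {p | dt y p < 0} ↔ p ∈ K ∩ {p | 0 < dt y p} := by
      change (-p ∈ K ∧ dt y (-p) < 0) ↔ (p ∈ K ∧ 0 < dt y p)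
      rw [h2, hk, neg_lt_zero]
    by_cases h : p ∈ K ∩ {p | 0 < dt y p}
    · rw [indicator_of_mem h, indicator_of_mem (this.2 h), neg_neg]
    · rw [indicator_of_notMem h, indicator_of_notMem (fun h' => h (this.1 h'))]

/-- strip area -/
def AA (K : Set Pl) (φ r : ℝ) : ℝ≥0∞ :=
  volume {q ∈ K | |q 0 * Real.sin φ - q 1 * Real.cos φ| ≤ r}

def LL (K : Set Pl) (φ r : ℝ) : ℝ≥0∞ := volume {t : ℝ | rp φ r t ∈ K}

lemma AA_meas {K : Set Pl} (hK : MeasurableSet K) : Measurable (fun z : ℝ × ℝ => AA K z.1 z.2) := by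
  have : MeasurableSet {w : (ℝ × ℝ) × Pl | w.2 ∈ K ∧
      |w.2 0 * Real.sin w.1.1 - w.2 1 * Real.cos w.1.1| ≤ w.1.2} := by
    have h1 : Continuous (fun w : (ℝ × ℝ) × Pl =>
      |w.2 0 * Real.sin w.1.1 - w.2 1 * Real.cos w.1.1|) := by fun_prop
    have h2 : Continuous (fun w : (ℝ × ℝ) × Pl => w.1.2) := by fun_prop
    exact (measurable_snd hK).inter (measurableSet_le h1.measurable h2.measurable)
  exact measurable_measure_prodMk_left this

lemma LL_meas {K : Set Pl} (hK : MeasurableSet K) : Measurable (fun z : ℝ × ℝ => LL K z.1 z.2) := by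
  have : MeasurableSet {w : (ℝ × ℝ) × ℝ | rp w.1.1 w.1.2 w.2 ∈ K} := by
    have hc : Continuous (fun w : (ℝ × ℝ) × ℝ => rp w.1.1 w.1.2 w.2) := by unfold rp; fun_prop
    exact hc.measurable hK
  exact measurable_measure_prodMk_left this

lemma Phi_meas {K : Set Pl} (hK : MeasurableSet K) (y : Pl) : Measurable (fun p => Phi K y p) := by
  have : MeasurableSet {w : Pl × Pl | w.2 ∈ K ∧ |dt w.2 (w.1 - y)| ≤ |dt y w.1|} := by
    have h1 : Continuous (fun w : Pl × Pl => |dt w.2 (w.1 - y)|) := by unfold dt; fun_prop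
    have h2 : Continuous (fun w : Pl × Pl => |dt y w.1|) := by unfold dt; fun_prop
    exact (measurable_snd hK).inter (measurableSet_le h1.measurable h2.measurable)
  exact measurable_measure_prodMk_left this

lemma rp_isometry (φ r : ℝ) : Isometry (fun t => rp φ r t) := by
  refine Isometry.of_dist_eq fun s t => ?_
  rw [EuclideanSpace.dist_eq, Real.dist_eq, Fin.sum_univ_two, ← Real.sqrt_sq_eq_abs]
  congr 1
  simp [rp, Real.dist_eq, sq_abs]
  linear_combination (s - t) ^ 2 * cs φ

lemma chord_compact {K : Set Pl} (hK : IsCompact K) (φ r : ℝ) :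
    IsCompact {t : ℝ | rp φ r t ∈ K} :=
  (rp_isometry φ r).isClosedEmbedding.isCompact_preimage hK

lemma chord_convex {K : Set Pl} (hK : Convex ℝ K) (φ r : ℝ) :
    Convex ℝ {t : ℝ | rp φ r t ∈ K} := by
  intro s hs t ht a b ha hb hab
  have : rp φ r (a • s + b • t) = a • rp φ r s + b • rp φ r t := by
    apply pl_ext <;> simp [rp]
    · linear_combination (-r * Real.sin φ) * hab
    · linear_combination (r * Real.cos φ) * hab
  change rp φ r (a • s + b • t) ∈ K
  rw [this]
  exact hK hs ht ha hb hab

/-- direction -/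
def vv (φ ρ : ℝ) : Pl := !₂[ρ * Real.cos φ, ρ * Real.sin φ]
def uu (φ : ℝ) (y : Pl) : ℝ := y 0 * Real.sin φ - y 1 * Real.cos φ

def HH (M : ℕ) (K : Set Pl) (φ : ℝ) (y : Pl) (ρ : ℝ) : ℝ≥0∞ :=
  K.indicator 1 y * (ENNReal.ofReal ρ * K.indicator 1 (y + vv φ ρ)) *
    ((Ioi (0 : ℝ)).indicator 1 (uu φ y) * AA K φ (uu φ y) ^ M)

lemma HH_meas (M : ℕ) {K : Set Pl} (hK : MeasurableSet K) :
    Measurable (fun z : (ℝ × Pl) × ℝ => HH M K z.1.1 z.1.2 z.2) := by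
  have h1 : Measurable (K.indicator (1 : Pl → ℝ≥0∞)) := measurable_one.indicator hK
  have h2 : Measurable ((Ioi (0 : ℝ)).indicator (1 : ℝ → ℝ≥0∞)) :=
    measurable_one.indicator measurableSet_Ioi
  have h3 : Measurable (fun z : (ℝ × Pl) × ℝ => z.1.2 + vv z.1.1 z.2) := by
    have hv : Continuous (fun w : ℝ × ℝ => vv w.1 w.2) := by unfold vv; fun_prop
    exact (measurable_snd.comp measurable_fst).add
      (hv.measurable.comp ((measurable_fst.comp measurable_fst).prodMk measurable_snd))
  have h4 : Measurable (fun z : (ℝ × Pl) × ℝ => uu z.1.1 z.1.2) := by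
    have hu : Continuous (fun w : ℝ × Pl => uu w.1 w.2) := by unfold uu; fun_prop
    exact hu.measurable.comp measurable_fst
  have a1 : Measurable (fun z : (ℝ × Pl) × ℝ => K.indicator (1 : Pl → ℝ≥0∞) z.1.2) :=
    h1.comp (measurable_snd.comp measurable_fst)
  have a2 : Measurable (fun z : (ℝ × Pl) × ℝ => ENNReal.ofReal z.2) :=
    ENNReal.measurable_ofReal.comp measurable_snd
  have a3 : Measurable (fun z : (ℝ × Pl) × ℝ => K.indicator (1 : Pl → ℝ≥0∞) (z.1.2 + vv z.1.1 z.2)) :=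
    h1.comp h3
  have a4 : Measurable (fun z : (ℝ × Pl) × ℝ =>
      (Ioi (0 : ℝ)).indicator (1 : ℝ → ℝ≥0∞) (uu z.1.1 z.1.2)) := h2.comp h4
  have h5 : Measurable (fun z : (ℝ × Pl) × ℝ => ((z.1.1, uu z.1.1 z.1.2) : ℝ × ℝ)) :=
    (measurable_fst.comp measurable_fst).prodMk h4
  have a5 := (AA_meas hK).comp h5
  exact (a1.mul (a2.mul a3)).mul (a4.mul (a5.pow_const M))

lemma stepD1 {M : ℕ} {K : Set Pl} (hK : MeasurableSet K) (y : Pl) :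
    K.indicator (fun y => ∫⁻ p in K ∩ {p | 0 < dt y p}, Phi K y p ^ M) y =
      ∫⁻ φ in Ioo (-Real.pi) Real.pi, ∫⁻ ρ in Ioi (0 : ℝ), HH M K φ y ρ := by
  by_cases hy : y ∈ K
  swap
  · simp [hy, HH]
  have hp : MeasurableSet {p : Pl | 0 < dt y p} := measurableSet_lt measurable_const (dt_meas y)
  rw [indicator_of_mem hy, ← lintegral_indicator (hK.inter hp), ← lintegral_add_left_eq_self _ y,
    lint_polar]
  · refine lintegral_congr fun φ => setLIntegral_congr_fun measurableSet_Ioi fun ρ hρ => ?_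
    have hρ : 0 < ρ := hρ
    change ENNReal.ofReal ρ * (K ∩ {p | 0 < dt y p}).indicator (fun p => Phi K y p ^ M) (y + vv φ ρ) =
      HH M K φ y ρ
    have e : dt y (y + vv φ ρ) = ρ * uu φ y := by simp [dt, vv, uu]; ring
    have e2 : ∀ q, dt q (y + vv φ ρ - y) = ρ * uu φ q := by intro q; simp [dt, vv, uu]; ring
    simp only [HH, hy, indicator_of_mem, Pi.one_apply, one_mul, mul_assoc]
    congr 1
    by_cases h1 : y + vv φ ρ ∈ K
    swap
    · simp [h1]
    by_cases h2 : 0 < uu φ y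
    · have hm : y + vv φ ρ ∈ K ∩ {p | 0 < dt y p} := by
        refine ⟨h1, ?_⟩
        change 0 < dt y _
        rw [e]; positivity
      rw [indicator_of_mem hm, indicator_of_mem h1, indicator_of_mem (show uu φ y ∈ Ioi 0 from h2)]
      simp only [Pi.one_apply, one_mul]
      congr 1
      unfold Phi AA
      congr 1
      ext q
      change (q ∈ K ∧ |dt q (y + vv φ ρ - y)| ≤ |dt y (y + vv φ ρ)|) ↔ (q ∈ K ∧ |uu φ q| ≤ uu φ y)
      rw [e, e2, abs_mul, abs_mul, abs_of_pos h2, abs_of_pos hρ, mul_le_mul_iff_right₀ hρ]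
    · have hm : y + vv φ ρ ∉ K ∩ {p | 0 < dt y p} := by
        rintro ⟨-, h⟩
        change 0 < dt y _ at h
        rw [e] at h
        exact h2 (pos_of_mul_pos_right h hρ.le)
      rw [indicator_of_notMem hm, indicator_of_notMem (show uu φ y ∉ Ioi 0 from h2)]
      simp
  · exact (((Phi_meas hK y).pow_const M).indicator (hK.inter hp)).comp (measurable_const_add y)

lemma stepD {M : ℕ} {K : Set Pl} (hKc : IsCompact K) (hc : Convex ℝ K) :
    ∫⁻ y in K, ∫⁻ p in K ∩ {p | 0 < dt y p}, Phi K y p ^ M =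
      (∫⁻ φ in Ioo (-Real.pi) Real.pi, ∫⁻ r in Ioi (0 : ℝ), AA K φ r ^ M * LL K φ r ^ 3) / 6 := by
  have hK := hKc.measurableSet
  have hm := HH_meas M hK
  have hm2 : Measurable (fun z : ℝ × Pl => ∫⁻ ρ in Ioi (0 : ℝ), HH M K z.1 z.2 ρ) :=
    Measurable.lintegral_prod_right' (ν := volume.restrict (Ioi (0 : ℝ))) hm
  rw [← lintegral_indicator hK]
  simp only [stepD1 hK]
  rw [lintegral_lintegral_swap (f := fun (y : Pl) (φ : ℝ) => ∫⁻ ρ in Ioi (0 : ℝ), HH M K φ y ρ)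
    (hm2.comp measurable_swap).aemeasurable]
  rw [div_eq_mul_inv, ← lintegral_mul_const' _ _ (by simp)]
  refine lintegral_congr fun φ => ?_
  rw [lint_rot φ (fun y => ∫⁻ ρ in Ioi (0 : ℝ), HH M K φ y ρ) (hm2.comp measurable_prodMk_left), ← lintegral_mul_const' _ _ (by simp),
    ← lintegral_indicator measurableSet_Ioi]
  refine lintegral_congr fun r => ?_
  have e1 : ∀ t, uu φ (rp φ r t) = r := by
    intro t; simp [uu, rp]; linear_combination r * cs φ
  have e2 : ∀ t ρ, rp φ r t + vv φ ρ = rp φ r (t + ρ) := by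
    intro t ρ; apply pl_ext <;> simp [vv, rp] <;> ring
  have hA : AA K φ r ^ M ≠ ∞ := by
    refine ENNReal.pow_ne_top (ne_top_of_le_ne_top hKc.measure_lt_top.ne (measure_mono fun q h => h.1))
  have hcst : (Ioi (0 : ℝ)).indicator (1 : ℝ → ℝ≥0∞) r * AA K φ r ^ M ≠ ∞ := by
    refine ENNReal.mul_ne_top ?_ hA
    by_cases h : r ∈ Ioi (0 : ℝ) <;> simp [h]
  have e3 : ∀ t, K.indicator (1 : Pl → ℝ≥0∞) (rp φ r t) =
      {t : ℝ | rp φ r t ∈ K}.indicator 1 t := fun t => rfl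
  simp only [HH, e1, e2, e3]
  simp only [lintegral_mul_const' _ _ hcst]
  rw [interval_int _ (chord_compact hKc φ r) (chord_convex hc φ r)]
  by_cases h : r ∈ Ioi (0 : ℝ)
  · simp only [h, indicator_of_mem, Pi.one_apply, one_mul, LL, div_eq_mul_inv]
    ring
  · simp [h]

def ZZ (M : ℕ) (K : Set Pl) : ℝ≥0∞ :=
  ∫⁻ φ in Ioo (-Real.pi) Real.pi, ∫⁻ r in Ioi (0 : ℝ), AA K φ r ^ M * LL K φ r ^ 3

lemma stepE {M : ℕ} {K : Set Pl} (hKc : IsCompact K) (hc : Convex ℝ K) (hs : K = -K) :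
    ∫⁻ y in K, volume {x ∈ KN (M + 1) K | y ∉ hull x} = (M + 1 : ℕ) * (2 * (ZZ M K / 6)) := by
  have hK := hKc.measurableSet
  unfold ZZ
  rw [← stepD hKc hc, ← lintegral_const_mul' _ _ (by simp), ← lintegral_const_mul' _ _ (by simp)]
  refine lintegral_congr_ae ?_
  have h0 : ∀ᵐ y : Pl ∂volume.restrict K, y ≠ 0 := by
    refine ae_restrict_of_ae ?_
    rw [ae_iff]; simp
  filter_upwards [h0] with y hy
  rw [stepB hK hy, stepC hK hs hy]

lemma stepF {M : ℕ} {K : Set Pl} (hKc : IsCompact K) (hZ : ZZ M K ≠ ∞) :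
    ∫ θ in (0 : ℝ)..(2 * Real.pi), ∫ r in Set.Ioi (0 : ℝ),
        (volume ({p : EuclideanSpace ℝ (Fin 2) |
            |p 0 * Real.cos θ + p 1 * Real.sin θ| ≤ r} ∩ K)).toReal ^ M *
        ((μH[1] ({p : EuclideanSpace ℝ (Fin 2) |
            p 0 * Real.cos θ + p 1 * Real.sin θ = r} ∩ K)).toReal) ^ 3 = (ZZ M K).toReal := by
  have hK := hKc.measurableSet
  set G : ℝ → ℝ := fun θ => ∫ r in Set.Ioi (0 : ℝ),
        (volume ({p : EuclideanSpace ℝ (Fin 2) |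
            |p 0 * Real.cos θ + p 1 * Real.sin θ| ≤ r} ∩ K)).toReal ^ M *
        ((μH[1] ({p : EuclideanSpace ℝ (Fin 2) |
            p 0 * Real.cos θ + p 1 * Real.sin θ = r} ∩ K)).toReal) ^ 3 with hG
  have hper : Function.Periodic G (2 * Real.pi) := by
    intro θ
    simp only [hG, Real.cos_add_two_pi, Real.sin_add_two_pi]
  have hjm : Measurable (fun z : ℝ × ℝ => AA K z.1 z.2 ^ M * LL K z.1 z.2 ^ 3) :=
    ((AA_meas hK).pow_const M).mul ((LL_meas hK).pow_const 3)
  have hGs : ∀ φ, G (φ - Real.pi / 2) =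
      (∫⁻ r in Ioi (0 : ℝ), AA K φ r ^ M * LL K φ r ^ 3).toReal := by
    intro φ
    rw [← integral_toReal]
    · simp only [hG]
      refine integral_congr_ae (Filter.Eventually.of_forall fun r => ?_)
      simp only [Real.cos_sub_pi_div_two, Real.sin_sub_pi_div_two, mul_neg, ← sub_eq_add_neg,
        ENNReal.toReal_mul, ENNReal.toReal_pow]
      rw [chord_hausdorff K φ r]
      congr 4
      rw [inter_comm]
      rfl
    · exact (hjm.comp measurable_prodMk_left).aemeasurable
    · refine Filter.Eventually.of_forall fun r => ?_
      refine ENNReal.mul_lt_top (ENNReal.pow_lt_top ?_) (ENNReal.pow_lt_top ?_)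
      · exact lt_of_le_of_lt (measure_mono fun q h => h.1) hKc.measure_lt_top
      · exact (chord_compact hKc φ r).measure_lt_top
  have e1 : ∫ θ in (0 : ℝ)..(2 * Real.pi), G θ = ∫ φ in (-Real.pi)..Real.pi, G (φ - Real.pi / 2) := by
    rw [intervalIntegral.integral_comp_sub_right G (Real.pi / 2)]
    have := hper.intervalIntegral_add_eq 0 (-Real.pi - Real.pi / 2)
    rw [zero_add] at this
    rw [this]
    congr 1
    ring
  rw [e1, intervalIntegral.integral_of_le (by linarith [Real.pi_pos]),
    integral_Ioc_eq_integral_Ioo]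
  simp only [hGs]
  have hm1 : Measurable (fun φ => ∫⁻ r in Ioi (0 : ℝ), AA K φ r ^ M * LL K φ r ^ 3) :=
    Measurable.lintegral_prod_right' (ν := volume.restrict (Ioi (0 : ℝ))) hjm
  rw [integral_toReal hm1.aemeasurable (ae_lt_top hm1 hZ)]
  rfl

/-- Proposition `n = 2`: if `K ⊆ ℝ²` is a symmetric convex body of area 1 and `N ≥ 2`,
then `𝔼 V_{K,N} = 1 − (N/3) ∫₀^{2π} ∫₀^∞ A(r,θ)^{N−1} ℓ(r,θ)³ dr dθ`, where
`ℓ(r,θ)` is the length of the chord `{(x,y) : (x,y)·(cos θ, sin θ) = r} ∩ K` and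
`A(r,θ)` is the area of the strip `{(x,y) : |(x,y)·(cos θ, sin θ)| ≤ r} ∩ K`. -/
theorem momentV_formula_dim_two
    (K : Set (EuclideanSpace ℝ (Fin 2))) (hK : IsSymConvexBody K)
    (hvol : volume K = 1) (N : ℕ) (hN : 2 ≤ N) :
    momentV 2 N K 1 =
      1 - (N / 3 : ℝ) * ∫ θ in (0 : ℝ)..(2 * Real.pi), ∫ r in Set.Ioi (0 : ℝ),
        (volume ({p : EuclideanSpace ℝ (Fin 2) |
            |p 0 * Real.cos θ + p 1 * Real.sin θ| ≤ r} ∩ K)).toReal ^ (N - 1) *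
        ((μH[1] ({p : EuclideanSpace ℝ (Fin 2) |
            p 0 * Real.cos θ + p 1 * Real.sin θ = r} ∩ K)).toReal) ^ 3 := by

  obtain ⟨hKc, hc, -, hs⟩ := hK
  obtain ⟨M, rfl⟩ : ∃ M, N = M + 1 := ⟨N - 1, by omega⟩
  have hA := stepA (N := M + 1) hKc hc hs hvol
  have hY := stepE (M := M) hKc hc hs
  set X := ∫⁻ x in KN (M + 1) K, volume (hull x) with hX
  rw [hY] at hA
  have hXt : X ≠ ∞ := fun h => by rw [h] at hA; simp at hA
  have hYt : ((M + 1 : ℕ) : ℝ≥0∞) * (2 * (ZZ M K / 6)) ≠ ∞ := fun h => by rw [h] at hA; simp at hA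
  have hZ : ZZ M K ≠ ∞ := by
    intro h
    apply hYt
    rw [h, ENNReal.top_div_of_ne_top (by simp), ENNReal.mul_top (by simp), ENNReal.mul_top (by simp)]
  have hmom : momentV 2 (M + 1) K 1 = X.toReal := by
    have hcl : MeasurableSet {z : (Fin (M + 1) → Pl) × Pl | z.2 ∈ hull z.1} := by
      have h := (hull_open (N := M + 1)).measurableSet.compl
      convert h using 1
      ext z; simp
    have hm : Measurable (fun x : Fin (M + 1) → Pl => volume (hull x)) :=
      measurable_measure_prodMk_left hcl
    unfold momentV
    rw [hX, ← integral_toReal hm.aemeasurable]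
    · simp only [hvol, ENNReal.toReal_one, div_one, one_pow, Real.rpow_one]
      rfl
    · refine Filter.Eventually.of_forall fun x => ?_
      have hfin : (Set.range x ∪ -Set.range x).Finite :=
        (Set.finite_range x).union (Set.finite_range x).neg
      exact (hfin.isCompact_convexHull ℝ).measure_lt_top
  have hF := stepF hKc hZ
  rw [Nat.add_sub_cancel, hmom, hF]
  have := congrArg ENNReal.toReal hA
  rw [ENNReal.toReal_add hXt hYt] at this
  simp only [ENNReal.toReal_mul, ENNReal.toReal_div, ENNReal.toReal_natCast, ENNReal.toReal_ofNat,
    ENNReal.toReal_one] at this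
  linarith
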